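/- arXiv:1401.2823 — 3 statements merged into one kernel-verified Lean document; each statement's English description precedes it below -/
import Mathlib

section
/- Let η1 > 2, h > 0, and set Δ = √(η1² − 4), z₊ = √((η1 − Δ)/2), z₋ = √((η1 + Δ)/2). Then ∫₀^∞ u·J₀(u·h)/(1 + η1·u² + u⁴) du = (K₀(h·z₊) − K₀(h·z₋))/√(η1² − 4). Consequently the two-dimensional Spartan covariance C(h) = (η0/2π)·∫₀^∞ u·J₀(u·h)/(1 + η1·u² + u⁴) du equals η0·(K₀(h·z₊) − K₀(h·z₋))/(2π·√(η1² − 4)) for every amplitude η0 > 0. -/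
open MeasureTheory Real

/-- Bessel function of the first kind of order zero,
`J₀(x) = (1/π) ∫₀^π cos (x sin θ) dθ`. -/
noncomputable def besselJ0 (x : ℝ) : ℝ :=
  (1 / Real.pi) * ∫ θ in (0:ℝ)..Real.pi, Real.cos (x * Real.sin θ)

/-- Modified Bessel function of the second kind of order zero (for `x > 0`),
`K₀(x) = ∫₀^∞ exp (−x cosh t) dt`. -/
noncomputable def besselK0 (x : ℝ) : ℝ :=
  ∫ t in Set.Ioi (0:ℝ), Real.exp (-x * Real.cosh t)

theorem continuous_besselJ0 : Continuous besselJ0 := by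
  unfold besselJ0
  exact continuous_const.mul
    (intervalIntegral.continuous_parametric_intervalIntegral_of_continuous' (by fun_prop) _ _)

theorem abs_besselJ0_le_one (x : ℝ) : |besselJ0 x| ≤ 1 := by
  have h := intervalIntegral.norm_integral_le_of_norm_le_const (a := 0) (b := Real.pi) (C := 1)
    (f := fun θ => Real.cos (x * Real.sin θ)) (fun θ _ => Real.abs_cos_le_one _)
  rw [one_mul, sub_zero, abs_of_pos Real.pi_pos, Real.norm_eq_abs] at h
  rw [besselJ0, abs_mul, abs_of_pos (by positivity : 0 < 1 / Real.pi), one_div,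
    inv_mul_le_iff₀ Real.pi_pos, mul_one]
  exact h

theorem integral_cos_mul_sin_eq_besselJ0 (x : ℝ) :
    ∫ θ in Set.Ioo (-Real.pi) Real.pi, Real.cos (x * Real.sin θ) = 2 * Real.pi * besselJ0 x := by
  have hc : Continuous fun θ : ℝ => Real.cos (x * Real.sin θ) := by fun_prop
  have hneg : ∫ θ in (-Real.pi)..0, Real.cos (x * Real.sin θ)
      = ∫ θ in (0:ℝ)..Real.pi, Real.cos (x * Real.sin θ) := by
    have := intervalIntegral.integral_comp_neg (a := 0) (b := Real.pi)
      (fun θ => Real.cos (x * Real.sin θ))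
    simpa using this.symm
  rw [← integral_Ioc_eq_integral_Ioo,
    ← intervalIntegral.integral_of_le (by linarith [Real.pi_pos]),
    ← intervalIntegral.integral_add_adjacent_intervals (b := 0)
      (hc.intervalIntegrable _ _) (hc.intervalIntegrable _ _), hneg, besselJ0]
  field_simp
  ring

theorem integral_exp_neg_mul_sq_mul_cos {s : ℝ} (hs : 0 < s) (h : ℝ) :
    ∫ y : ℝ, Real.exp (-s * y ^ 2) * Real.cos (h * y)
      = √(Real.pi / s) * Real.exp (-h ^ 2 / (4 * s)) := by
  have key := congrArg Complex.re (fourierIntegral_gaussian (b := (s : ℂ)) (by simpa using hs) h)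
  have hrhs : ((Real.pi / s : ℂ) ^ (1 / 2 : ℂ) * Complex.exp (-(h : ℂ) ^ 2 / (4 * s)))
      = ((√(Real.pi / s) * Real.exp (-h ^ 2 / (4 * s)) : ℝ) : ℂ) := by
    rw [Real.sqrt_eq_rpow]
    push_cast [Complex.ofReal_cpow (by positivity : 0 ≤ Real.pi / s)]
    rfl
  have hint : Integrable fun y : ℝ =>
      Complex.exp (Complex.I * h * y) * Complex.exp (-(s : ℂ) * (y : ℂ) ^ 2) := by
    refine (integrable_exp_neg_mul_sq hs).mono' (by fun_prop) (.of_forall fun y => ?_)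
    rw [norm_mul, Complex.norm_exp, Complex.norm_exp]
    simp [← Complex.ofReal_pow]
  rw [hrhs, Complex.ofReal_re, ← RCLike.re_eq_complex_re, ← integral_re hint] at key
  rw [← key]
  congr 1 with y
  have h1 : Complex.I * h * y = ((h * y : ℝ) : ℂ) * Complex.I := by push_cast; ring
  have h2 : -(s : ℂ) * (y : ℂ) ^ 2 = ((-s * y ^ 2 : ℝ) : ℂ) := by push_cast; ring
  rw [RCLike.re_eq_complex_re, h1, h2, ← Complex.ofReal_exp, Complex.re_mul_ofReal,
    Complex.exp_ofReal_mul_I_re, mul_comm]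

/-- Weber's integral. -/
theorem integral_mul_besselJ0_mul_exp_neg_mul_sq {s : ℝ} (hs : 0 < s) (h : ℝ) :
    ∫ u in Set.Ioi (0:ℝ), u * besselJ0 (u * h) * Real.exp (-s * u ^ 2)
      = Real.exp (-h ^ 2 / (4 * s)) / (2 * s) := by
  have key := integral_comp_polarCoord_symm fun p : ℝ × ℝ =>
    Real.exp (-s * p.1 ^ 2) * (Real.exp (-s * p.2 ^ 2) * Real.cos (h * p.2))
  have hpolar : ∀ p : ℝ × ℝ,
      p.1 • (Real.exp (-s * (polarCoord.symm p).1 ^ 2) *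
        (Real.exp (-s * (polarCoord.symm p).2 ^ 2) * Real.cos (h * (polarCoord.symm p).2)))
      = p.1 * Real.exp (-s * p.1 ^ 2) * Real.cos (p.1 * h * Real.sin p.2) := by
    intro p
    rw [polarCoord_symm_apply, smul_eq_mul, ← mul_assoc (Real.exp _), ← Real.exp_add]
    have : -s * (p.1 * Real.cos p.2) ^ 2 + -s * (p.1 * Real.sin p.2) ^ 2 = -s * p.1 ^ 2 := by
      linear_combination -s * p.1 ^ 2 * Real.sin_sq_add_cos_sq p.2
    rw [this, mul_assoc]
    ring_nf
  simp_rw [hpolar] at key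
  have hint : IntegrableOn (fun p : ℝ × ℝ =>
      p.1 * Real.exp (-s * p.1 ^ 2) * Real.cos (p.1 * h * Real.sin p.2))
      (Set.Ioi 0 ×ˢ Set.Ioo (-Real.pi) Real.pi) (volume.prod volume) := by
    rw [IntegrableOn, ← Measure.prod_restrict]
    have hprod := Integrable.mul_prod
      ((integrable_mul_exp_neg_mul_sq hs).integrableOn (s := Set.Ioi 0))
      (integrable_const (1 : ℝ) (μ := volume.restrict (Set.Ioo (-Real.pi) Real.pi)))
    refine hprod.norm.mono' (by fun_prop) (.of_forall fun p => ?_)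
    rw [norm_mul, mul_one]
    exact mul_le_of_le_one_right (norm_nonneg _) (Real.abs_cos_le_one _)
  rw [polarCoord_target, Measure.volume_eq_prod, setIntegral_prod _ hint,
    integral_prod_mul (fun x => Real.exp (-s * x ^ 2))
      fun y => Real.exp (-s * y ^ 2) * Real.cos (h * y),
    integral_gaussian, integral_exp_neg_mul_sq_mul_cos hs, ← mul_assoc,
    Real.mul_self_sqrt (by positivity)] at key
  simp_rw [integral_const_mul, integral_cos_mul_sin_eq_besselJ0] at key
  have hcomm : ∀ u : ℝ, u * Real.exp (-s * u ^ 2) * (2 * Real.pi * besselJ0 (u * h))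
      = 2 * Real.pi * (u * besselJ0 (u * h) * Real.exp (-s * u ^ 2)) := fun u => by ring
  simp_rw [hcomm, integral_const_mul] at key
  refine mul_left_cancel₀ (by positivity : 2 * Real.pi ≠ 0) (key.trans ?_)
  field_simp

theorem integrable_exp_neg_mul_cosh {x : ℝ} (hx : 0 < x) :
    Integrable fun t : ℝ => Real.exp (-x * Real.cosh t) := by
  refine (integrable_exp_neg_mul_sq (by positivity : 0 < x / 4)).mono' (by fun_prop)
    (.of_forall fun t => ?_)
  rw [Real.norm_eq_abs, Real.abs_exp, Real.exp_le_exp, ← Real.cosh_abs, Real.cosh_eq]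
  have h := Real.quadratic_le_exp_of_nonneg (abs_nonneg t)
  rw [sq_abs] at h
  nlinarith [Real.exp_pos (-|t|), abs_nonneg t]

theorem image_univ_const_mul_exp {c : ℝ} (hc : 0 < c) :
    (fun t : ℝ => c * Real.exp t) '' Set.univ = Set.Ioi 0 := by
  ext y
  simp only [Set.image_univ, Set.mem_range, Set.mem_Ioi]
  refine ⟨fun ⟨t, ht⟩ => ht ▸ by positivity, fun hy => ⟨Real.log (y / c), ?_⟩⟩
  rw [Real.exp_log (by positivity)]
  field_simp

theorem abs_smul_besselK0_integrand {h p : ℝ} (hh : 0 < h) (hp : 0 < p) (t : ℝ) :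
    |h / (2 * p) * Real.exp t| •
      (Real.exp (-h ^ 2 / (4 * (h / (2 * p) * Real.exp t))) / (2 * (h / (2 * p) * Real.exp t)) *
        Real.exp (-p ^ 2 * (h / (2 * p) * Real.exp t)))
      = Real.exp (-(h * p) * Real.cosh t) / 2 := by
  have he := Real.exp_pos t
  rw [abs_of_pos (by positivity), smul_eq_mul, div_mul_eq_mul_div (Real.exp _) (2 * _), ← Real.exp_add]
  have : -h ^ 2 / (4 * (h / (2 * p) * Real.exp t)) + -p ^ 2 * (h / (2 * p) * Real.exp t)
      = -(h * p) * Real.cosh t := by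
    rw [Real.cosh_eq, Real.exp_neg]
    field_simp
    ring
  rw [this]
  field_simp

theorem integrableOn_besselK0_integrand {h p : ℝ} (hh : 0 < h) (hp : 0 < p) :
    IntegrableOn (fun s : ℝ => Real.exp (-h ^ 2 / (4 * s)) / (2 * s) * Real.exp (-p ^ 2 * s))
      (Set.Ioi 0) := by
  have hc : 0 < h / (2 * p) := by positivity
  rw [← image_univ_const_mul_exp hc, integrableOn_image_iff_integrableOn_abs_deriv_smul .univ
    (fun t _ => ((Real.hasDerivAt_exp t).const_mul (h / (2 * p))).hasDerivWithinAt)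
    (fun a _ b _ hab => Real.exp_injective (mul_left_cancel₀ hc.ne' hab))]
  simp_rw [abs_smul_besselK0_integrand hh hp]
  exact ((integrable_exp_neg_mul_cosh (by positivity)).div_const 2).integrableOn

theorem integral_besselK0_integrand {h p : ℝ} (hh : 0 < h) (hp : 0 < p) :
    ∫ s in Set.Ioi (0:ℝ), Real.exp (-h ^ 2 / (4 * s)) / (2 * s) * Real.exp (-p ^ 2 * s)
      = besselK0 (h * p) := by
  have hc : 0 < h / (2 * p) := by positivity
  rw [← image_univ_const_mul_exp hc, integral_image_eq_integral_abs_deriv_smul .univ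
    (fun t _ => ((Real.hasDerivAt_exp t).const_mul (h / (2 * p))).hasDerivWithinAt)
    (fun a _ b _ hab => Real.exp_injective (mul_left_cancel₀ hc.ne' hab))]
  simp_rw [abs_smul_besselK0_integrand hh hp]
  have habs := integral_comp_abs (f := fun t => Real.exp (-(h * p) * Real.cosh t))
  simp_rw [Real.cosh_abs] at habs
  rw [setIntegral_univ, integral_div, habs, besselK0]
  ring

theorem integrableOn_mul_exp_mul_exp_sub {p q : ℝ} (hp : 0 < p) (hq : 0 < q) (c u : ℝ) :
    IntegrableOn (fun s : ℝ => c * Real.exp (-s * u ^ 2) *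
      (Real.exp (-p ^ 2 * s) - Real.exp (-q ^ 2 * s))) (Set.Ioi 0) := by
  have hi : ∀ r : ℝ, 0 < r →
      IntegrableOn (fun s : ℝ => Real.exp (-(u ^ 2 + r ^ 2) * s)) (Set.Ioi 0) :=
    fun r hr => integrableOn_exp_mul_Ioi (by nlinarith [sq_nonneg u, sq_pos_of_pos hr]) 0
  refine (((hi p hp).sub (hi q hq)).const_mul c).congr (.of_forall fun s => ?_)
  simp only [Pi.sub_apply]
  rw [mul_assoc, mul_sub (Real.exp _), ← Real.exp_add, ← Real.exp_add]
  ring_nf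

theorem integral_mul_exp_mul_exp_sub {p q : ℝ} (hp : 0 < p) (hq : 0 < q) (c u : ℝ) :
    ∫ s in Set.Ioi (0:ℝ), c * Real.exp (-s * u ^ 2) *
      (Real.exp (-p ^ 2 * s) - Real.exp (-q ^ 2 * s))
      = (q ^ 2 - p ^ 2) * (c / ((u ^ 2 + p ^ 2) * (u ^ 2 + q ^ 2))) := by
  have hneg : ∀ r : ℝ, 0 < r → -(u ^ 2 + r ^ 2) < 0 :=
    fun r hr => by nlinarith [sq_nonneg u, sq_pos_of_pos hr]
  have heq : ∀ s : ℝ, c * Real.exp (-s * u ^ 2) *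
      (Real.exp (-p ^ 2 * s) - Real.exp (-q ^ 2 * s))
      = c * (Real.exp (-(u ^ 2 + p ^ 2) * s) - Real.exp (-(u ^ 2 + q ^ 2) * s)) := by
    intro s
    rw [mul_assoc, mul_sub (Real.exp _), ← Real.exp_add, ← Real.exp_add]
    ring_nf
  simp_rw [heq]
  rw [integral_const_mul, integral_sub (integrableOn_exp_mul_Ioi (hneg p hp) 0)
    (integrableOn_exp_mul_Ioi (hneg q hq) 0), integral_exp_mul_Ioi (hneg p hp),
    integral_exp_mul_Ioi (hneg q hq), mul_zero, mul_zero, Real.exp_zero]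
  have h1 : u ^ 2 + p ^ 2 ≠ 0 := by positivity
  have h2 : u ^ 2 + q ^ 2 ≠ 0 := by positivity
  rw [neg_div_neg_eq, neg_div_neg_eq]
  field_simp
  ring

theorem integrableOn_div_sq_add_mul_sq_add {p q : ℝ} (hp : 0 < p) (hq : 0 < q) (h : ℝ) :
    IntegrableOn (fun u : ℝ => u * besselJ0 (u * h) / ((u ^ 2 + p ^ 2) * (u ^ 2 + q ^ 2)))
      (Set.Ioi 0) := by
  have hdom : Integrable fun u : ℝ => (2 * p * q ^ 2)⁻¹ * (1 + (u * q⁻¹) ^ 2)⁻¹ :=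
    (integrable_inv_one_add_sq.comp_mul_right' (inv_ne_zero hq.ne')).const_mul _
  have hJ : Continuous fun u : ℝ => besselJ0 (u * h) := continuous_besselJ0.comp (by fun_prop)
  refine hdom.integrableOn.mono' (Continuous.aestronglyMeasurable ?_) ?_
  · exact (continuous_id.mul hJ).div (by fun_prop) fun u => by positivity
  · filter_upwards [ae_restrict_mem measurableSet_Ioi] with u hu
    have hu : 0 < u := hu
    rw [Real.norm_eq_abs, abs_div, abs_mul, abs_of_pos hu,
      abs_of_pos (by positivity : 0 < (u ^ 2 + p ^ 2) * (u ^ 2 + q ^ 2)),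
      div_le_iff₀ (by positivity)]
    have heq : (2 * p * q ^ 2)⁻¹ * (1 + (u * q⁻¹) ^ 2)⁻¹ * ((u ^ 2 + p ^ 2) * (u ^ 2 + q ^ 2))
        = (u ^ 2 + p ^ 2) / (2 * p) := by
      field_simp
      ring
    rw [heq, le_div_iff₀ (by positivity)]
    nlinarith [mul_le_of_le_one_right hu.le (abs_besselJ0_le_one (u * h)), sq_nonneg (u - p)]

/-- The Hankel transform of order zero of `1 / ((u² + p²) (u² + q²))`. -/
theorem integral_mul_besselJ0_div {h p q : ℝ} (hh : 0 < h) (hp : 0 < p) (hpq : p ≤ q) :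
    (q ^ 2 - p ^ 2) * ∫ u in Set.Ioi (0:ℝ),
        u * besselJ0 (u * h) / ((u ^ 2 + p ^ 2) * (u ^ 2 + q ^ 2))
      = besselK0 (h * p) - besselK0 (h * q) := by
  have hq : 0 < q := hp.trans_le hpq
  let f : ℝ → ℝ → ℝ := fun u s => u * besselJ0 (u * h) * Real.exp (-s * u ^ 2) *
    (Real.exp (-p ^ 2 * s) - Real.exp (-q ^ 2 * s))
  have hJ : Continuous fun u : ℝ => besselJ0 (u * h) := continuous_besselJ0.comp (by fun_prop)
  have hf : Integrable (Function.uncurry f)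
      ((volume.restrict (Set.Ioi 0)).prod (volume.restrict (Set.Ioi 0))) := by
    have hcont : Continuous (Function.uncurry f) := by
      have : Continuous fun z : ℝ × ℝ => besselJ0 (z.1 * h) := hJ.comp continuous_fst
      simp only [f, Function.uncurry_def]
      fun_prop
    rw [integrable_prod_iff hcont.aestronglyMeasurable]
    refine ⟨.of_forall fun u => integrableOn_mul_exp_mul_exp_sub hp hq (u * besselJ0 (u * h)) u, ?_⟩
    refine ((integrableOn_div_sq_add_mul_sq_add hp hq h).norm.const_mul (q ^ 2 - p ^ 2)).congr
      (.of_forall fun u => ?_)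
    dsimp only
    rw [norm_div, Real.norm_of_nonneg (by positivity : 0 ≤ (u ^ 2 + p ^ 2) * (u ^ 2 + q ^ 2)),
      ← integral_mul_exp_mul_exp_sub hp hq]
    refine setIntegral_congr_fun measurableSet_Ioi fun s hs => ?_
    have hs : 0 < s := hs
    have hsub : 0 ≤ Real.exp (-p ^ 2 * s) - Real.exp (-q ^ 2 * s) := by
      rw [sub_nonneg, Real.exp_le_exp]
      nlinarith [mul_le_mul_of_nonneg_right (pow_le_pow_left₀ hp.le hpq 2) hs.le]
    simp only [f, Function.uncurry_apply_pair]
    rw [norm_mul _ (_ - _), norm_mul _ (Real.exp _), Real.norm_of_nonneg hsub,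
      Real.norm_of_nonneg (Real.exp_pos _).le]
  have hswap := integral_integral_swap hf
  have hleft : ∀ u, ∫ s in Set.Ioi (0:ℝ), f u s = (q ^ 2 - p ^ 2) *
      (u * besselJ0 (u * h) / ((u ^ 2 + p ^ 2) * (u ^ 2 + q ^ 2))) :=
    fun u => integral_mul_exp_mul_exp_sub hp hq _ u
  have hright : ∫ s in Set.Ioi (0:ℝ), ∫ u in Set.Ioi (0:ℝ), f u s
      = besselK0 (h * p) - besselK0 (h * q) := by
    rw [← integral_besselK0_integrand hh hp, ← integral_besselK0_integrand hh hq,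
      ← integral_sub (integrableOn_besselK0_integrand hh hp)
        (integrableOn_besselK0_integrand hh hq)]
    refine setIntegral_congr_fun measurableSet_Ioi fun s hs => ?_
    simp only [f]
    rw [integral_mul_const, integral_mul_besselJ0_mul_exp_neg_mul_sq hs, mul_sub]
  simp_rw [hleft] at hswap
  rw [integral_const_mul] at hswap
  rw [hswap, hright]

/-- Two-dimensional Spartan covariance, case `η₁ > 2`. -/
theorem spartan_covariance_eta1_gt_two (η1 h : ℝ) (hη : 2 < η1) (hh : 0 < h)
    (Δ zp zm : ℝ) (hΔ : Δ = Real.sqrt (η1 ^ 2 - 4))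
    (hzp : zp = Real.sqrt ((η1 - Δ) / 2))
    (hzm : zm = Real.sqrt ((η1 + Δ) / 2)) :
    (∫ u in Set.Ioi (0:ℝ), u * besselJ0 (u * h) / (1 + η1 * u ^ 2 + u ^ 4))
      = (besselK0 (h * zp) - besselK0 (h * zm)) / Real.sqrt (η1 ^ 2 - 4) ∧
    ∀ η0 : ℝ, 0 < η0 →
      (η0 / (2 * Real.pi)) *
          (∫ u in Set.Ioi (0:ℝ), u * besselJ0 (u * h) / (1 + η1 * u ^ 2 + u ^ 4))
        = η0 * (besselK0 (h * zp) - besselK0 (h * zm))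
            / (2 * Real.pi * Real.sqrt (η1 ^ 2 - 4)) := by
  have hD : 0 < η1 ^ 2 - 4 := by nlinarith
  have hΔ0 : 0 < Δ := hΔ ▸ Real.sqrt_pos.2 hD
  have hΔsq : Δ ^ 2 = η1 ^ 2 - 4 := hΔ ▸ Real.sq_sqrt hD.le
  have hlt : Δ < η1 := by nlinarith
  have hp : 0 < zp := hzp ▸ Real.sqrt_pos.2 (by linarith)
  have hp2 : zp ^ 2 = (η1 - Δ) / 2 := hzp ▸ Real.sq_sqrt (by linarith)
  have hm2 : zm ^ 2 = (η1 + Δ) / 2 := hzm ▸ Real.sq_sqrt (by linarith)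
  have hle : zp ≤ zm := by
    rw [hzp, hzm]
    exact Real.sqrt_le_sqrt (by linarith)
  have hfactor : ∀ u : ℝ, 1 + η1 * u ^ 2 + u ^ 4 = (u ^ 2 + zp ^ 2) * (u ^ 2 + zm ^ 2) := by
    intro u
    rw [hp2, hm2]
    linear_combination (1 / 4) * hΔsq
  have key : (∫ u in Set.Ioi (0:ℝ), u * besselJ0 (u * h) / (1 + η1 * u ^ 2 + u ^ 4))
      = (besselK0 (h * zp) - besselK0 (h * zm)) / Real.sqrt (η1 ^ 2 - 4) := by
    simp_rw [hfactor]
    rw [← hΔ, eq_div_iff hΔ0.ne', ← integral_mul_besselJ0_div hh hp hle, hp2, hm2]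
    ring
  refine ⟨key, fun η0 _ => ?_⟩
  rw [key, div_mul_div_comm]
end

section
/- Let −2 < η1 < 2, 0 < α < 1, and ξ > 0. Then ∫₀^∞ x^{1+2α}/(1 + η1·ξ²·x² + ξ⁴·x⁴) dx = ξ^{−2−2α}·Γ(1+α)·Γ(1−α)·sin(α·arccos(η1/2))/(α·√(4 − η1²)). (This is the real form of the value of the integral I_α(φ) in the correlation-spectrum computation of Proposition 3 for |η1| < 2, obtained from the complex-root formula by writing η1 ± i√(4−η1²) = 2 e^{±i·arccos(η1/2)}.) -/
open MeasureTheory Real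

theorem integrableOn_rpow_mul_exp_neg_mul {a r : ℝ} (ha : 0 < a) (hr : 0 < r) :
    IntegrableOn (fun t : ℝ ↦ t ^ (a - 1) * Real.exp (-(r * t))) (Set.Ioi 0) :=
  Integrable.of_integral_ne_zero <| by
    rw [integral_rpow_mul_exp_neg_mul_Ioi ha hr]
    exact (mul_pos (by positivity) (Gamma_pos_of_pos ha)).ne'

/-- Euler's integral with a complex rate. -/
theorem integral_rpow_mul_cexp_neg_mul_Ioi {a : ℝ} {r : ℂ} (ha : 0 < a) (hr : 0 < r.re) :
    ∫ t in Set.Ioi (0 : ℝ), ((t ^ (a - 1) : ℝ) : ℂ) * Complex.exp (-(r * t))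
      = r ^ (-a : ℂ) * Real.Gamma a := by
  let μ : Measure ℝ := (volume.restrict (Set.Ioi 0)).withDensity
    fun t ↦ ENNReal.ofReal (t ^ (a - 1))
  have hmeas : Measurable fun t : ℝ ↦ ENNReal.ofReal (t ^ (a - 1)) := by fun_prop
  have hfin : ∀ᵐ t ∂volume.restrict (Set.Ioi (0 : ℝ)), ENNReal.ofReal (t ^ (a - 1)) < ⊤ :=
    ae_of_all _ fun _ ↦ ENNReal.ofReal_lt_top
  have hmgf (z : ℂ) : ProbabilityTheory.complexMGF (fun t ↦ -t) μ z
      = ∫ t in Set.Ioi (0 : ℝ), ((t ^ (a - 1) : ℝ) : ℂ) * Complex.exp (-(z * t)) := by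
    rw [ProbabilityTheory.complexMGF, integral_withDensity_eq_integral_toReal_smul hmeas hfin]
    refine setIntegral_congr_fun measurableSet_Ioi fun t ht ↦ ?_
    simp [ENNReal.toReal_ofReal (rpow_nonneg (Set.mem_Ioi.1 ht).le _)]
  have hset : Set.Ioi 0 ⊆ interior (ProbabilityTheory.integrableExpSet (fun t : ℝ ↦ -t) μ) := by
    refine interior_maximal (fun s hs ↦ ?_) isOpen_Ioi
    rw [ProbabilityTheory.integrableExpSet, Set.mem_ofPred_eq,
      integrable_withDensity_iff_integrable_smul' hmeas hfin]
    refine (integrableOn_rpow_mul_exp_neg_mul ha hs).congr_fun (fun t ht ↦ ?_) measurableSet_Ioi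
    simp [ENNReal.toReal_ofReal (rpow_nonneg (Set.mem_Ioi.1 ht).le _)]
  have hopen : IsOpen {z : ℂ | 0 < z.re} := isOpen_lt continuous_const Complex.continuous_re
  have hf : AnalyticOnNhd ℂ (ProbabilityTheory.complexMGF (fun t : ℝ ↦ -t) μ) {z | 0 < z.re} :=
    ProbabilityTheory.analyticOnNhd_complexMGF.mono fun z hz ↦ hset hz
  have hg : AnalyticOnNhd ℂ (fun z : ℂ ↦ z ^ (-a : ℂ) * Real.Gamma a) {z | 0 < z.re} := by
    refine DifferentiableOn.analyticOnNhd (fun z hz ↦ ?_) hopen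
    exact ((differentiableAt_id.cpow_const (Or.inl hz)).mul_const _).differentiableWithinAt
  have hreal (s : ℝ) (hs : 0 < s) : ProbabilityTheory.complexMGF (fun t ↦ -t) μ s
      = (s : ℂ) ^ (-a : ℂ) * Real.Gamma a := by
    rw [hmgf]
    have h := congrArg ((↑) : ℝ → ℂ) (integral_rpow_mul_exp_neg_mul_Ioi ha hs)
    rw [← integral_complex_ofReal, one_div, inv_rpow hs.le, ← rpow_neg hs.le] at h
    push_cast [Complex.ofReal_cpow hs.le] at h ⊢
    exact h
  have hfreq : ∃ᶠ z in nhdsWithin (1 : ℂ) {1}ᶜ,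
      ProbabilityTheory.complexMGF (fun t : ℝ ↦ -t) μ z = z ^ (-a : ℂ) * Real.Gamma a := by
    have ht : Filter.Tendsto ((↑) : ℝ → ℂ) (nhdsWithin 1 {1}ᶜ) (nhdsWithin 1 {1}ᶜ) := by
      refine tendsto_nhdsWithin_iff.2 ⟨?_, ?_⟩
      · exact (Complex.continuous_ofReal.tendsto' 1 1 Complex.ofReal_one).mono_left
          nhdsWithin_le_nhds
      · filter_upwards [self_mem_nhdsWithin] with s hs
        simpa using hs
    refine ht.frequently (Filter.Eventually.frequently ?_)
    filter_upwards [nhdsWithin_le_nhds (lt_mem_nhds (zero_lt_one' ℝ))] with s hs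
    exact hreal s hs
  rw [← hmgf]
  exact hf.eqOn_of_preconnected_of_frequently_eq hg
    (convex_halfSpace_re_gt 0).isPreconnected (by simp) hfreq hr

/-- The joint integrand obtained by writing `1 / (u * w + v)` as a Laplace integral in `t`. -/
theorem integrable_prod_rpow_mul_cexp {a : ℝ} {w v : ℂ} (ha : 0 < a) (ha' : a < 1)
    (hw : 0 < w.re) (hv : 0 < v.re) :
    Integrable (Function.uncurry fun u t : ℝ ↦
        ((u ^ (a - 1) : ℝ) : ℂ) * Complex.exp (-((t * w) * u)) * Complex.exp (-(v * t)))
      ((volume.restrict (Set.Ioi 0)).prod (volume.restrict (Set.Ioi 0))) := by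
  have hnorm {u : ℝ} (hu : 0 < u) (t : ℝ) :
      ‖((u ^ (a - 1) : ℝ) : ℂ) * Complex.exp (-((t * w) * u)) * Complex.exp (-(v * t))‖
        = u ^ (a - 1) * Real.exp (-((t * w.re) * u)) * Real.exp (-(v.re * t)) := by
    simp [Complex.norm_exp, abs_of_nonneg (rpow_nonneg hu.le (a - 1))]
  refine (integrable_prod_iff' (Measurable.aestronglyMeasurable (by fun_prop))).2 ⟨?_, ?_⟩
  · filter_upwards [ae_restrict_mem measurableSet_Ioi] with t ht
    refine (((integrableOn_rpow_mul_exp_neg_mul ha (mul_pos ht hw)).mul_const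
      (Real.exp (-(v.re * t)))).mono' (Measurable.aestronglyMeasurable (by fun_prop)) ?_)
    filter_upwards [ae_restrict_mem measurableSet_Ioi] with u hu
    exact (hnorm hu t).le
  · refine IntegrableOn.congr_fun (((integrableOn_rpow_mul_exp_neg_mul
      (sub_pos.2 ha') hv).const_mul (w.re ^ (-a) * Real.Gamma a))) (fun t ht ↦ ?_) measurableSet_Ioi
    have ht' : 0 < t := ht
    refine Eq.symm ((setIntegral_congr_fun measurableSet_Ioi fun u hu ↦ hnorm hu t).trans ?_)
    rw [integral_mul_const, integral_rpow_mul_exp_neg_mul_Ioi ha (mul_pos ht' hw), one_div,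
      inv_rpow (by positivity), ← rpow_neg (by positivity), mul_rpow ht'.le hw.le,
      show 1 - a - 1 = -a by ring]
    ring

theorem integral_cexp_neg_mul_Ioi {r : ℂ} (hr : 0 < r.re) :
    ∫ t in Set.Ioi (0 : ℝ), Complex.exp (-(r * t)) = r⁻¹ := by
  simpa [Complex.cpow_neg_one] using
    integral_rpow_mul_cexp_neg_mul_Ioi (a := 1) one_pos hr

theorem integral_rpow_mul_cexp_mul_cexp {a : ℝ} {w v : ℂ} (hw : 0 < w.re) (hv : 0 < v.re)
    {u : ℝ} (hu : 0 < u) :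
    ∫ t in Set.Ioi (0 : ℝ),
        ((u ^ (a - 1) : ℝ) : ℂ) * Complex.exp (-((t * w) * u)) * Complex.exp (-(v * t))
      = ((u ^ (a - 1) : ℝ) : ℂ) / (u * w + v) := by
  have hre : 0 < (u * w + v).re := by
    simp only [Complex.add_re, Complex.re_ofReal_mul]
    positivity
  rw [div_eq_mul_inv, ← integral_cexp_neg_mul_Ioi hre, ← integral_const_mul]
  congr 1 with t
  rw [mul_assoc, ← Complex.exp_add]
  ring_nf

theorem integrableOn_rpow_div_mul_add {a : ℝ} {w v : ℂ} (ha : 0 < a) (ha' : a < 1)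
    (hw : 0 < w.re) (hv : 0 < v.re) :
    IntegrableOn (fun u : ℝ ↦ ((u ^ (a - 1) : ℝ) : ℂ) / (u * w + v)) (Set.Ioi 0) :=
  IntegrableOn.congr_fun (integrable_prod_rpow_mul_cexp ha ha' hw hv).integral_prod_left
    (fun _ hu ↦ integral_rpow_mul_cexp_mul_cexp hw hv hu) measurableSet_Ioi

/-- Generalized Stieltjes transform of `u ^ (a - 1)`. -/
theorem integral_rpow_div_mul_add {a : ℝ} {w v : ℂ} (ha : 0 < a) (ha' : a < 1)
    (hw : 0 < w.re) (hv : 0 < v.re) :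
    ∫ u in Set.Ioi (0 : ℝ), ((u ^ (a - 1) : ℝ) : ℂ) / (u * w + v)
      = Real.Gamma a * Real.Gamma (1 - a) * (w ^ (-a : ℂ) * v ^ (a - 1 : ℂ)) := by
  rw [← setIntegral_congr_fun measurableSet_Ioi fun u hu ↦ integral_rpow_mul_cexp_mul_cexp hw hv hu,
    integral_integral_swap (integrable_prod_rpow_mul_cexp ha ha' hw hv)]
  calc
    _ = ∫ t in Set.Ioi (0 : ℝ), (w ^ (-a : ℂ) * Real.Gamma a) *
          (((t ^ ((1 - a) - 1) : ℝ) : ℂ) * Complex.exp (-(v * t))) := by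
      refine setIntegral_congr_fun measurableSet_Ioi fun t ht ↦ ?_
      have ht' : 0 < t := ht
      have hre : 0 < (t * w).re := by
        rw [Complex.re_ofReal_mul]
        positivity
      have hw' : w ≠ 0 := fun h ↦ by simp [h] at hw
      have hpow : (t * w) ^ (-a : ℂ) = (t : ℂ) ^ (-a : ℂ) * w ^ (-a : ℂ) := by
        have ht0 : (t : ℂ) ≠ 0 := Complex.ofReal_ne_zero.2 ht'.ne'
        rw [Complex.cpow_def_of_ne_zero (mul_ne_zero ht0 hw'), Complex.cpow_def_of_ne_zero ht0,
          Complex.cpow_def_of_ne_zero hw', ← Complex.exp_add, Complex.log_ofReal_mul ht' hw',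
          Complex.ofReal_log ht'.le]
        ring_nf
      rw [integral_mul_const, integral_rpow_mul_cexp_neg_mul_Ioi ha hre, hpow,
        show 1 - a - 1 = -a by ring, Complex.ofReal_cpow ht'.le, Complex.ofReal_neg]
      ring
    _ = _ := by
      rw [integral_const_mul, integral_rpow_mul_cexp_neg_mul_Ioi (sub_pos.2 ha') hv]
      push_cast
      rw [neg_sub]
      ring

/-- Mellin transform of the reciprocal of a quadratic with conjugate roots `-exp (± i θ)`. -/
theorem integral_rpow_div_quadratic {a θ : ℝ} (ha : 0 < a) (ha' : a < 1)
    (hθ : 0 < θ) (hθ' : θ < π) :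
    ∫ u in Set.Ioi (0 : ℝ), u ^ a / (1 + 2 * Real.cos θ * u + u ^ 2)
      = Real.Gamma a * Real.Gamma (1 - a) * Real.sin (a * θ) / Real.sin θ := by
  have hsin : 0 < Real.sin θ := sin_pos_of_pos_of_lt_pi hθ hθ'
  have hcos : 0 < Real.cos (θ / 2) := cos_pos_of_mem_Ioo ⟨by linarith, by linarith⟩
  set v : ℂ := Complex.exp ((θ / 2 : ℝ) * Complex.I) with hv
  set w : ℂ := Complex.exp ((-(θ / 2) : ℝ) * Complex.I) with hw
  have hv0 : 0 < v.re := by rwa [hv, Complex.exp_ofReal_mul_I_re]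
  have hw0 : 0 < w.re := by rwa [hw, Complex.exp_ofReal_mul_I_re, Real.cos_neg]
  have hpow (φ : ℝ) (h1 : -π < φ) (h2 : φ ≤ π) (s : ℝ) :
      Complex.exp (φ * Complex.I) ^ (s : ℂ) = Complex.exp ((φ * s : ℝ) * Complex.I) := by
    rw [Complex.cpow_def_of_ne_zero (Complex.exp_ne_zero _), Complex.log_exp (by simpa) (by simpa)]
    push_cast
    ring_nf
  have hint := integrableOn_rpow_div_mul_add ha ha' hw0 hv0
  have hptw {u : ℝ} (hu : 0 < u) :
      RCLike.im (v * (((u ^ (a - 1) : ℝ) : ℂ) / (u * w + v)))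
        = Real.sin θ * (u ^ a / (1 + 2 * Real.cos θ * u + u ^ 2)) := by
    have hD : 0 < 1 + 2 * Real.cos θ * u + u ^ 2 := by
      nlinarith [sq_nonneg (u + Real.cos θ), Real.sin_sq_add_cos_sq θ, sq_pos_of_pos hsin]
    have hvw : v * w = 1 := by
      rw [hv, hw, ← Complex.exp_add]
      simp
    have hv2 : v ^ 2 = Real.cos θ + Real.sin θ * Complex.I := by
      rw [hv, ← Complex.exp_nat_mul, Complex.ofReal_cos, Complex.ofReal_sin,
        ← Complex.exp_mul_I]
      push_cast
      ring_nf
    have hw2 : w ^ 2 = Real.cos θ - Real.sin θ * Complex.I := by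
      have hexp := Complex.exp_mul_I (-θ : ℂ)
      rw [Complex.cos_neg, Complex.sin_neg, neg_mul (Complex.sin _), ← sub_eq_add_neg] at hexp
      rw [hw, ← Complex.exp_nat_mul, Complex.ofReal_cos, Complex.ofReal_sin, ← hexp]
      push_cast
      ring_nf
    have hprod : (u * w + v) * (u * v + w)
        = ((1 + 2 * Real.cos θ * u + u ^ 2 : ℝ) : ℂ) := by
      push_cast at hv2 hw2 ⊢
      linear_combination (u ^ 2 + 1 : ℂ) * hvw + (u : ℂ) * hv2 + (u : ℂ) * hw2
    have hne : ((1 + 2 * Real.cos θ * u + u ^ 2 : ℝ) : ℂ) ≠ 0 :=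
      Complex.ofReal_ne_zero.2 hD.ne'
    have hne' : (u * w + v) ≠ 0 := left_ne_zero_of_mul (hprod ▸ hne)
    have hquot : v * (((u ^ (a - 1) : ℝ) : ℂ) / (u * w + v))
        = ((u ^ (a - 1) / (1 + 2 * Real.cos θ * u + u ^ 2) : ℝ) : ℂ) * (u * v ^ 2 + 1) := by
      rw [Complex.ofReal_div, mul_div_assoc', div_mul_eq_mul_div, div_eq_div_iff hne' hne, ← hprod]
      linear_combination ((u ^ (a - 1) : ℝ) : ℂ) * (u * w + v) * hvw
    rw [hquot, RCLike.im_eq_complex_im, Complex.im_ofReal_mul, hv2, Real.rpow_sub_one hu.ne']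
    simp only [Complex.add_im, Complex.im_ofReal_mul, Complex.ofReal_im, Complex.one_im,
      Complex.I_im]
    field_simp
    ring
  have hval : RCLike.im (∫ u in Set.Ioi (0 : ℝ), v * (((u ^ (a - 1) : ℝ) : ℂ) / (u * w + v)))
      = Real.Gamma a * Real.Gamma (1 - a) * Real.sin (a * θ) := by
    rw [integral_const_mul, integral_rpow_div_mul_add ha ha' hw0 hv0]
    have : v * (Real.Gamma a * Real.Gamma (1 - a) * (w ^ (-a : ℂ) * v ^ (a - 1 : ℂ)))
        = ((Real.Gamma a * Real.Gamma (1 - a) : ℝ) : ℂ) *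
          Complex.exp ((a * θ : ℝ) * Complex.I) := by
      have e1 := hpow (-(θ / 2)) (by linarith) (by linarith) (-a)
      have e2 := hpow (θ / 2) (by linarith) (by linarith) (a - 1)
      rw [Complex.ofReal_neg a] at e1
      rw [Complex.ofReal_sub, Complex.ofReal_one] at e2
      rw [hw, hv, e1, e2]
      rw [← Complex.exp_add, mul_left_comm, ← Complex.exp_add]
      push_cast
      ring_nf
    rw [this, RCLike.im_eq_complex_im, Complex.im_ofReal_mul, Complex.exp_ofReal_mul_I_im]
  rw [eq_div_iff hsin.ne', ← hval, ← integral_im (hint.const_mul v),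
    setIntegral_congr_fun measurableSet_Ioi fun u hu ↦ hptw hu, integral_const_mul, mul_comm]

/-- Value of the correlation-spectrum integral `I_α(φ)` for `|η₁| < 2` (real form):
`∫₀^∞ x^{1+2α}/(1 + η₁ξ²x² + ξ⁴x⁴) dx
  = ξ^{−2−2α} Γ(1+α) Γ(1−α) sin(α arccos(η₁/2))/(α √(4−η₁²))`. -/
theorem ssrf_correlation_integral_abs_eta1_lt_two (η1 α ξ : ℝ)
    (hη1 : -2 < η1) (hη2 : η1 < 2) (hα0 : 0 < α) (hα1 : α < 1) (hξ : 0 < ξ) :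
    (∫ x in Set.Ioi (0:ℝ), x ^ (1 + 2 * α) / (1 + η1 * ξ ^ 2 * x ^ 2 + ξ ^ 4 * x ^ 4))
      = ξ ^ (-2 - 2 * α) * Real.Gamma (1 + α) * Real.Gamma (1 - α)
          * Real.sin (α * Real.arccos (η1 / 2)) / (α * Real.sqrt (4 - η1 ^ 2)) := by
  set θ := Real.arccos (η1 / 2) with hθ
  have hcos : 2 * Real.cos θ = η1 := by
    rw [hθ, Real.cos_arccos (by linarith) (by linarith)]
    ring
  have hsin : √(4 - η1 ^ 2) = 2 * Real.sin θ := by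
    rw [hθ, Real.sin_arccos, show 4 - η1 ^ 2 = 2 ^ 2 * (1 - (η1 / 2) ^ 2) by ring,
      Real.sqrt_mul (by norm_num), Real.sqrt_sq (by norm_num)]
  have hθ0 : 0 < θ := Real.arccos_pos.2 (by linarith)
  have hθπ : θ < π := Real.arccos_lt_pi.2 (by linarith)
  have key := integral_rpow_div_quadratic hα0 hα1 hθ0 hθπ
  rw [hcos, ← integral_comp_rpow_Ioi_of_pos two_pos] at key
  have hscale := integral_comp_mul_left_Ioi (fun y : ℝ ↦ (2 * y ^ (2 - 1 : ℝ)) •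
    ((y ^ (2 : ℝ)) ^ α / (1 + η1 * y ^ (2 : ℝ) + (y ^ (2 : ℝ)) ^ 2))) 0 hξ
  rw [mul_zero, key] at hscale
  have hcongr : ∀ x ∈ Set.Ioi (0 : ℝ),
      x ^ (1 + 2 * α) / (1 + η1 * ξ ^ 2 * x ^ 2 + ξ ^ 4 * x ^ 4)
        = (ξ ^ (-1 - 2 * α) / 2) * ((2 * (ξ * x) ^ (2 - 1 : ℝ)) •
          (((ξ * x) ^ (2 : ℝ)) ^ α /
            (1 + η1 * (ξ * x) ^ (2 : ℝ) + ((ξ * x) ^ (2 : ℝ)) ^ 2))) := by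
    intro x hx
    have hx' : 0 < x := hx
    have h2α : ((ξ * x) ^ (2 : ℝ)) ^ α = ξ ^ (2 * α) * x ^ (2 * α) := by
      rw [← Real.rpow_mul (by positivity), Real.mul_rpow hξ.le hx'.le]
    have hξα : ξ ^ (-1 - 2 * α) * ξ ^ (2 * α) * ξ = 1 := by
      rw [← Real.rpow_add hξ, ← Real.rpow_add_one hξ.ne']
      ring_nf
      exact Real.rpow_zero ξ
    rw [h2α, show (2 - 1 : ℝ) = 1 by norm_num, Real.rpow_one, Real.rpow_two,
      Real.rpow_add hx', Real.rpow_one, smul_eq_mul,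
      show 1 + η1 * (ξ * x) ^ 2 + ((ξ * x) ^ 2) ^ 2
        = 1 + η1 * ξ ^ 2 * x ^ 2 + ξ ^ 4 * x ^ 4 by ring]
    linear_combination -(x * x ^ (2 * α) / (1 + η1 * ξ ^ 2 * x ^ 2 + ξ ^ 4 * x ^ 4)) * hξα
  rw [setIntegral_congr_fun measurableSet_Ioi hcongr, integral_const_mul, hscale, hsin,
    add_comm 1 α, Real.Gamma_add_one hα0.ne', show -2 - 2 * α = -1 - 2 * α - 1 by ring,
    Real.rpow_sub_one hξ.ne', smul_eq_mul]
  have := (sin_pos_of_pos_of_lt_pi hθ0 hθπ).ne'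
  field_simp
end

section
/- Let 0 ≤ α < 1, h > 0, and z > 0. Then ∫₀^∞ x^{1+α}·J_α(h·x)/(x² + z²) dx = z^α·K_α(h·z), where the integral is understood as an improper (conditionally convergent) integral. (This is the Hankel–Nicholson formula with ν = α, μ = 0.) -/
open MeasureTheory Real Filter

/-- Bessel function of the first kind of order `α > −1/2` (Poisson integral
representation): `J_α(x) = (2(x/2)^α/(√π Γ(α+1/2))) ∫₀^{π/2} sin^{2α}θ cos(x cos θ) dθ`. -/
noncomputable def besselJ (α x : ℝ) : ℝ :=
  (2 * (x / 2) ^ α / (Real.sqrt Real.pi * Real.Gamma (α + 1 / 2))) *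
    ∫ θ in (0:ℝ)..(Real.pi / 2), Real.sin θ ^ (2 * α) * Real.cos (x * Real.cos θ)

/-- Modified Bessel function of the second kind of order `p` (for `x > 0`),
`K_p(x) = ∫₀^∞ exp (−x cosh t) cosh (p t) dt`. -/
noncomputable def besselK (p x : ℝ) : ℝ :=
  ∫ t in Set.Ioi (0:ℝ), Real.exp (-x * Real.cosh t) * Real.cosh (p * t)

/-- The cosine integral in the Poisson representation of `besselJ`. -/
noncomputable def poissonCos (α x : ℝ) : ℝ :=
  ∫ θ in (0:ℝ)..(π / 2), sin θ ^ (2 * α) * cos (x * cos θ)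

/-- Minus the derivative of `poissonCos α`. -/
noncomputable def poissonSin (α x : ℝ) : ℝ :=
  ∫ θ in (0:ℝ)..(π / 2), sin θ ^ (2 * α) * cos θ * sin (x * cos θ)

lemma continuous_sin_rpow {a : ℝ} (ha : 0 ≤ a) : Continuous fun θ : ℝ => sin θ ^ a :=
  Real.continuous_sin.rpow_const fun _ => Or.inr ha

lemma abs_sin_rpow_le_one {a θ : ℝ} (ha : 0 ≤ a) (hθ : θ ∈ Set.uIoc 0 (π / 2)) :
    |sin θ ^ a| ≤ 1 := by
  rw [Set.uIoc_of_le (by positivity)] at hθ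
  have h0 : 0 ≤ sin θ := sin_nonneg_of_nonneg_of_le_pi hθ.1.le (by linarith [hθ.2, pi_pos])
  rw [abs_of_nonneg (rpow_nonneg h0 _)]
  exact rpow_le_one h0 (sin_le_one θ) ha

lemma hasDerivAt_poissonCos {α : ℝ} (hα : 0 ≤ α) (x : ℝ) :
    HasDerivAt (poissonCos α) (-poissonSin α x) x := by
  have hc := continuous_sin_rpow (a := 2 * α) (by positivity)
  have := (intervalIntegral.hasDerivAt_integral_of_dominated_loc_of_deriv_le
    (μ := volume) (a := 0) (b := π / 2) (x₀ := x) (s := Set.univ) (bound := fun _ => 1)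
    (F := fun x θ => sin θ ^ (2 * α) * cos (x * cos θ))
    (F' := fun x θ => -(sin θ ^ (2 * α) * cos θ * sin (x * cos θ)))
    Filter.univ_mem
    (Eventually.of_forall fun y => Continuous.aestronglyMeasurable (by fun_prop))
    (Continuous.intervalIntegrable (by fun_prop) _ _)
    (Continuous.aestronglyMeasurable (by fun_prop))
    (Eventually.of_forall fun θ hθ y _ => ?_) intervalIntegrable_const
    (Eventually.of_forall fun θ hθ y _ => ?_)).2
  · simpa only [intervalIntegral.integral_neg] using! this
  · rw [norm_neg, norm_mul, norm_mul]
    exact mul_le_one₀ (mul_le_one₀ (abs_sin_rpow_le_one (by positivity) hθ) (norm_nonneg _)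
      (abs_cos_le_one _)) (norm_nonneg _) (abs_sin_le_one _)
  · have := (((hasDerivAt_id y).mul_const (cos θ)).cos).const_mul (sin θ ^ (2 * α))
    convert! this using 1
    simp; ring

/-- Bessel's equation for the Poisson integral, written as a first order system with
`hasDerivAt_poissonCos`. -/
lemma hasDerivAt_poissonSin {α : ℝ} (hα : 0 ≤ α) (x : ℝ) :
    ∃ d, HasDerivAt (poissonSin α) d x ∧
      (2 * α + 1) * poissonSin α x + x * d = x * poissonCos α x := by
  have hc := continuous_sin_rpow (a := 2 * α) (by positivity)
  have := (intervalIntegral.hasDerivAt_integral_of_dominated_loc_of_deriv_le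
    (μ := volume) (a := 0) (b := π / 2) (x₀ := x) (s := Set.univ) (bound := fun _ => 1)
    (F := fun x θ => sin θ ^ (2 * α) * cos θ * sin (x * cos θ))
    (F' := fun x θ => sin θ ^ (2 * α) * cos θ * (cos θ * cos (x * cos θ)))
    Filter.univ_mem
    (Eventually.of_forall fun y => Continuous.aestronglyMeasurable (by fun_prop))
    (Continuous.intervalIntegrable (by fun_prop) _ _)
    (Continuous.aestronglyMeasurable (by fun_prop))
    (Eventually.of_forall fun θ hθ y _ => ?_) intervalIntegrable_const
    (Eventually.of_forall fun θ hθ y _ => ?_)).2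
  · refine ⟨_, this, ?_⟩
    have hc' := continuous_sin_rpow (a := 2 * α + 1) (by positivity)
    have key := intervalIntegral.integral_eq_sub_of_hasDerivAt_of_le
      (f := fun θ => sin θ ^ (2 * α + 1) * sin (x * cos θ))
      (f' := fun θ => (2 * α + 1) * (sin θ ^ (2 * α) * cos θ * sin (x * cos θ)) +
        x * (sin θ ^ (2 * α) * cos θ * (cos θ * cos (x * cos θ))) -
        x * (sin θ ^ (2 * α) * cos (x * cos θ)))
      (a := 0) (b := π / 2) (by positivity) (Continuous.continuousOn (by fun_prop))
      (fun θ hθ => ?_) (Continuous.intervalIntegrable (by fun_prop) _ _)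
    · rw [intervalIntegral.integral_sub, intervalIntegral.integral_add,
        intervalIntegral.integral_const_mul, intervalIntegral.integral_const_mul,
        intervalIntegral.integral_const_mul] at key
      · have h0 : (0 : ℝ) ^ (2 * α + 1) = 0 := zero_rpow (by positivity)
        simp only [sin_zero, cos_pi_div_two, h0, mul_zero, zero_mul, sub_zero] at key
        unfold poissonSin poissonCos
        linarith
      all_goals exact Continuous.intervalIntegrable (by fun_prop) _ _
    · have hs : 0 < sin θ := sin_pos_of_pos_of_lt_pi hθ.1 (by linarith [hθ.2, pi_pos])
      have h1 := (hasDerivAt_sin θ).rpow_const (p := 2 * α + 1) (Or.inl hs.ne')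
      have h2 := ((hasDerivAt_cos θ).const_mul x).sin
      convert! h1.mul h2 using 1
      have e : sin θ ^ (2 * α + 1) = sin θ ^ (2 * α) * sin θ := rpow_add_one hs.ne' _
      rw [e, show 2 * α + 1 - 1 = 2 * α by ring]
      linear_combination (x * sin θ ^ (2 * α) * cos (x * cos θ)) * sin_sq_add_cos_sq θ
  · rw [norm_mul, norm_mul, norm_mul]
    exact mul_le_one₀ (mul_le_one₀ (abs_sin_rpow_le_one (by positivity) hθ) (norm_nonneg _)
      (abs_cos_le_one _)) (by positivity) (mul_le_one₀ (abs_cos_le_one _) (norm_nonneg _)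
      (abs_cos_le_one _))
  · have := (((hasDerivAt_id y).mul_const (cos θ)).sin).const_mul (sin θ ^ (2 * α) * cos θ)
    convert! this using 1
    rw [one_mul, id, mul_comm (cos θ)]

lemma continuous_poissonCos {α : ℝ} (hα : 0 ≤ α) : Continuous (poissonCos α) :=
  continuous_iff_continuousAt.2 fun x => (hasDerivAt_poissonCos hα x).continuousAt

lemma continuous_poissonSin {α : ℝ} (hα : 0 ≤ α) : Continuous (poissonSin α) :=
  continuous_iff_continuousAt.2 fun x => (hasDerivAt_poissonSin hα x).choose_spec.1.continuousAt

lemma abs_poissonCos_le {α : ℝ} (hα : 0 ≤ α) (x : ℝ) : |poissonCos α x| ≤ π / 2 := by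
  have := intervalIntegral.norm_integral_le_of_norm_le_const (a := 0) (b := π / 2) (C := 1)
    (f := fun θ => sin θ ^ (2 * α) * cos (x * cos θ)) fun θ hθ => by
      rw [norm_mul]
      exact mul_le_one₀ (abs_sin_rpow_le_one (by positivity) hθ) (norm_nonneg _)
        (abs_cos_le_one _)
  simpa [poissonCos, abs_of_pos (half_pos pi_pos)] using! this

lemma abs_poissonSin_le {α : ℝ} (hα : 0 ≤ α) (x : ℝ) : |poissonSin α x| ≤ π / 2 := by
  have := intervalIntegral.norm_integral_le_of_norm_le_const (a := 0) (b := π / 2) (C := 1)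
    (f := fun θ => sin θ ^ (2 * α) * cos θ * sin (x * cos θ)) fun θ hθ => by
      rw [norm_mul, norm_mul]
      exact mul_le_one₀ (mul_le_one₀ (abs_sin_rpow_le_one (by positivity) hθ) (norm_nonneg _)
        (abs_cos_le_one _)) (norm_nonneg _) (abs_sin_le_one _)
  simpa [poissonSin, abs_of_pos (half_pos pi_pos)] using! this

/-- For `α ≥ 1/2` an integration by parts gives decay of `poissonSin α`. -/
lemma exists_abs_mul_poissonSin_le {α : ℝ} (hα : 1 / 2 ≤ α) :
    ∃ C, ∀ x, |x * poissonSin α x| ≤ C := by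
  have hle : (0 : ℝ) ≤ π / 2 := by positivity
  have hsin : ∀ θ ∈ Set.Ioo (0:ℝ) (π / 2), 0 < sin θ := fun θ hθ =>
    sin_pos_of_pos_of_lt_pi hθ.1 (by linarith [hθ.2, pi_pos])
  have hc := continuous_sin_rpow (a := 2 * α - 1) (by linarith)
  have hc2 := continuous_sin_rpow (a := 2 * α) (by linarith)
  have hd : ∀ θ ∈ Set.Ioo (0:ℝ) (π / 2), HasDerivAt (fun θ => sin θ ^ (2 * α - 1))
      (cos θ * (2 * α - 1) * sin θ ^ (2 * α - 1 - 1)) θ := fun θ hθ =>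
    (hasDerivAt_sin θ).rpow_const (Or.inl (hsin θ hθ).ne')
  have hint : IntervalIntegrable (fun θ => cos θ * (2 * α - 1) * sin θ ^ (2 * α - 1 - 1))
      volume 0 (π / 2) := by
    apply intervalIntegral.intervalIntegrable_deriv_of_nonneg hc.continuousOn
    · simpa [hle] using hd
    · intro θ hθ
      simp only [hle, inf_of_le_left, sup_of_le_right] at hθ
      exact mul_nonneg (mul_nonneg (cos_nonneg_of_mem_Icc ⟨by linarith [hθ.1], hθ.2.le⟩)
        (by linarith)) (rpow_nonneg (hsin θ hθ).le _)
  set w : ℝ → ℝ := fun θ => cos θ * (2 * α - 1) * sin θ ^ (2 * α - 1 - 1) * cos θ +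
    sin θ ^ (2 * α - 1) * -sin θ with hw
  have hwint : IntervalIntegrable w volume 0 (π / 2) :=
    (hint.mul_continuousOn Real.continuous_cos.continuousOn).add
      (Continuous.intervalIntegrable (by fun_prop) _ _)
  refine ⟨1 + ∫ θ in (0:ℝ)..(π / 2), |w θ|, fun x => ?_⟩
  have hwx : IntervalIntegrable (fun θ => w θ * cos (x * cos θ)) volume 0 (π / 2) :=
    hwint.mul_continuousOn (Continuous.continuousOn (by fun_prop))
  have hsx : IntervalIntegrable (fun θ => x * (sin θ ^ (2 * α) * cos θ * sin (x * cos θ)))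
      volume 0 (π / 2) := Continuous.intervalIntegrable (by fun_prop) _ _
  have key := intervalIntegral.integral_eq_sub_of_hasDerivAt_of_le
      (f := fun θ => sin θ ^ (2 * α - 1) * cos θ * cos (x * cos θ))
      (f' := fun θ => w θ * cos (x * cos θ) +
        x * (sin θ ^ (2 * α) * cos θ * sin (x * cos θ)))
      (a := 0) (b := π / 2) hle (Continuous.continuousOn (by fun_prop))
      (fun θ hθ => ?_) (hwx.add hsx)
  · rw [intervalIntegral.integral_add hwx hsx, intervalIntegral.integral_const_mul] at key
    have e : x * poissonSin α x = -((0:ℝ) ^ (2 * α - 1) * cos x) -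
        ∫ θ in (0:ℝ)..(π / 2), w θ * cos (x * cos θ) := by
      simp only [cos_pi_div_two, sin_zero, cos_zero, mul_one, mul_zero, zero_sub] at key
      unfold poissonSin
      linarith
    rw [e]
    refine (abs_sub _ _).trans (add_le_add ?_ ?_)
    · rw [abs_neg, abs_mul]
      refine mul_le_one₀ ?_ (abs_nonneg _) (abs_cos_le_one _)
      rw [abs_of_nonneg (rpow_nonneg le_rfl _)]
      exact rpow_le_one le_rfl zero_le_one (by linarith)
    · refine (intervalIntegral.abs_integral_le_integral_abs hle).trans ?_
      refine intervalIntegral.integral_mono_on hle hwx.abs hwint.abs fun θ _ => ?_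
      rw [abs_mul]
      exact mul_le_of_le_one_right (abs_nonneg _) (abs_cos_le_one _)
  · have hs := hsin θ hθ
    convert! ((hd θ hθ).mul (hasDerivAt_cos θ)).mul ((hasDerivAt_cos θ).const_mul x).cos using 1
    have e : sin θ ^ (2 * α) = sin θ ^ (2 * α - 1) * sin θ := by
      rw [← rpow_add_one hs.ne']; ring_nf
    simp only [e, hw, Pi.mul_apply]
    ring

lemma poissonCos_zero_mul_Gamma {α : ℝ} (hα : 0 ≤ α) :
    poissonCos α 0 * Gamma (α + 1) = √π * Gamma (α + 1 / 2) / 2 := by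
  have himg : (fun θ : ℝ => sin θ ^ 2) '' Set.Ioo 0 (π / 2) = Set.Ioo 0 1 := by
    ext u
    constructor
    · rintro ⟨θ, hθ, rfl⟩
      have hs : 0 < sin θ := sin_pos_of_pos_of_lt_pi hθ.1 (by linarith [hθ.2, pi_pos])
      have hc : 0 < cos θ := cos_pos_of_mem_Ioo ⟨by linarith [hθ.1, pi_pos], hθ.2⟩
      exact ⟨by positivity, by nlinarith [sin_sq_add_cos_sq θ]⟩
    · intro hu
      have h1 : √u < 1 := by rw [sqrt_lt' one_pos]; simpa using hu.2
      have h0 : 0 < √u := sqrt_pos.2 hu.1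
      refine ⟨arcsin √u, ⟨arcsin_pos.2 h0, arcsin_lt_pi_div_two.2 h1⟩, ?_⟩
      simp only
      rw [sin_arcsin (by linarith) h1.le, sq_sqrt hu.1.le]
  have hinj : Set.InjOn (fun θ : ℝ => sin θ ^ 2) (Set.Ioo 0 (π / 2)) := by
    intro a ha b hb hab
    have h1 : 0 < sin a := sin_pos_of_pos_of_lt_pi ha.1 (by linarith [ha.2, pi_pos])
    have h2 : 0 < sin b := sin_pos_of_pos_of_lt_pi hb.1 (by linarith [hb.2, pi_pos])
    have h3 : sin a = sin b := by
      simpa using (pow_left_inj₀ h1.le h2.le two_ne_zero).1 hab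
    exact injOn_sin ⟨by linarith [ha.1, pi_pos], ha.2.le⟩ ⟨by linarith [hb.1, pi_pos], hb.2.le⟩ h3
  have hchange := MeasureTheory.integral_image_eq_integral_abs_deriv_smul
    (f' := fun θ => 2 * sin θ * cos θ) measurableSet_Ioo
    (fun θ _ => by
      have := ((hasDerivAt_sin θ).pow 2).hasDerivWithinAt (s := Set.Ioo 0 (π / 2))
      simpa using! this) hinj
    (fun u : ℝ => u ^ (α + 1 / 2 - 1) * (1 - u) ^ ((1 / 2 : ℝ) - 1))
  rw [himg] at hchange
  have hbeta := ProbabilityTheory.beta_eq_betaIntegralReal (α + 1 / 2) (1 / 2) (by positivity)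
    (by positivity)
  have hreal : Complex.betaIntegral ((α + 1 / 2 : ℝ) : ℂ) ((1 / 2 : ℝ) : ℂ) =
      ((∫ u in Set.Ioo (0:ℝ) 1, u ^ (α + 1 / 2 - 1) * (1 - u) ^ ((1 / 2 : ℝ) - 1) : ℝ) : ℂ) := by
    rw [Complex.betaIntegral, intervalIntegral.integral_of_le zero_le_one,
      integral_Ioc_eq_integral_Ioo, ← integral_complex_ofReal]
    refine setIntegral_congr_fun measurableSet_Ioo fun u hu => ?_
    rw [Complex.ofReal_mul, Complex.ofReal_cpow hu.1.le, Complex.ofReal_cpow (by linarith [hu.2])]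
    push_cast
    rfl
  have hW : ∫ θ in Set.Ioo (0:ℝ) (π / 2), |2 * sin θ * cos θ| •
      ((sin θ ^ 2) ^ (α + 1 / 2 - 1) * (1 - sin θ ^ 2) ^ ((1 / 2 : ℝ) - 1)) =
      2 * poissonCos α 0 := by
    rw [poissonCos, intervalIntegral.integral_of_le (by positivity),
      integral_Ioc_eq_integral_Ioo, ← integral_const_mul]
    refine setIntegral_congr_fun measurableSet_Ioo fun θ hθ => ?_
    have hs : 0 < sin θ := sin_pos_of_pos_of_lt_pi hθ.1 (by linarith [hθ.2, pi_pos])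
    have hc : 0 < cos θ := cos_pos_of_mem_Ioo ⟨by linarith [hθ.1, pi_pos], hθ.2⟩
    have e1 : (1 - sin θ ^ 2) ^ ((1 / 2 : ℝ) - 1) = (cos θ)⁻¹ := by
      rw [← cos_sq', ← rpow_natCast, ← rpow_mul hc.le, ← rpow_neg_one]
      norm_num
    have e2 : (sin θ ^ 2) ^ (α + 1 / 2 - 1) = sin θ ^ (2 * α) * (sin θ)⁻¹ := by
      rw [← rpow_natCast, ← rpow_mul hs.le, ← rpow_neg_one, ← rpow_add hs]
      congr 1; push_cast; ring
    simp only [smul_eq_mul, zero_mul, cos_zero, mul_one]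
    rw [e1, e2, abs_of_pos (by positivity)]
    field_simp
  rw [hreal, Complex.ofReal_re, hchange, hW, ProbabilityTheory.beta, Gamma_one_half_eq,
    show α + 1 / 2 + 1 / 2 = α + 1 by ring] at hbeta
  have hG : Gamma (α + 1) ≠ 0 := (Gamma_pos_of_pos (by positivity)).ne'
  field_simp at hbeta ⊢
  linarith

lemma integrableOn_gaussian_mul {g : ℝ → ℝ} {s t C : ℝ} (hs : -1 < s) (ht : 0 < t)
    (hg : Continuous g) (hC : ∀ x, |g x| ≤ C) :
    IntegrableOn (fun x => x ^ s * exp (-t * x ^ 2) * g x) (Set.Ioi 0) :=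
  Integrable.mul_bdd (c := C) (integrableOn_rpow_mul_exp_neg_mul_sq ht hs)
    hg.aestronglyMeasurable (Eventually.of_forall hC)

lemma hasDerivAt_gaussian_poissonCos {α t : ℝ} (hα : 0 ≤ α) (ht : 0 < t) (y : ℝ) :
    HasDerivAt (fun y => ∫ x in Set.Ioi 0,
        x ^ (2 * α + 1) * exp (-t * x ^ 2) * poissonCos α (y * x))
      (-∫ x in Set.Ioi 0, x ^ (2 * α + 2) * exp (-t * x ^ 2) * poissonSin α (y * x)) y := by
  have hF := continuous_poissonCos hα
  have hG := continuous_poissonSin hα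
  have hmeas : ∀ s : ℝ, AEStronglyMeasurable (fun x : ℝ => x ^ s * exp (-t * x ^ 2))
      (volume.restrict (Set.Ioi 0)) := fun s =>
    Measurable.aestronglyMeasurable (by fun_prop)
  have hint := integrableOn_rpow_mul_exp_neg_mul_sq ht (s := 2 * α + 2) (by linarith)
  have := (hasDerivAt_integral_of_dominated_loc_of_deriv_le
    (μ := volume.restrict (Set.Ioi (0:ℝ))) (x₀ := y) (s := Set.univ)
    (bound := fun x => x ^ (2 * α + 2) * exp (-t * x ^ 2) * (π / 2))
    (F := fun y x => x ^ (2 * α + 1) * exp (-t * x ^ 2) * poissonCos α (y * x))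
    (F' := fun y x => -(x ^ (2 * α + 2) * exp (-t * x ^ 2) * poissonSin α (y * x)))
    Filter.univ_mem
    (Eventually.of_forall fun y => (hmeas _).mul
      (Continuous.aestronglyMeasurable (by fun_prop)))
    (integrableOn_gaussian_mul (by linarith) ht (by fun_prop) fun x => abs_poissonCos_le hα _)
    ((hmeas _).mul (Continuous.aestronglyMeasurable (by fun_prop))).neg
    ?_ (hint.mul_const _) ?_).2
  · simpa only [integral_neg] using! this
  · refine (ae_restrict_mem measurableSet_Ioi).mono fun x hx y _ => ?_
    have hx : 0 < x := hx
    rw [norm_neg, norm_mul, norm_of_nonneg (by positivity)]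
    exact mul_le_mul_of_nonneg_left (abs_poissonSin_le hα _) (by positivity)
  · refine (ae_restrict_mem measurableSet_Ioi).mono fun x hx y _ => ?_
    have hx : 0 < x := hx
    have h1 := ((hasDerivAt_poissonCos hα (y * x)).comp y ((hasDerivAt_id y).mul_const x)).const_mul
      (x ^ (2 * α + 1) * exp (-t * x ^ 2))
    convert! h1 using 1
    rw [show 2 * α + 2 = 2 * α + 1 + 1 by ring, rpow_add_one hx.ne' (2 * α + 1)]
    ring

lemma hasDerivAt_rpow_mul_poissonSin {α x : ℝ} (hα : 0 ≤ α) (hx : 0 < x) (y : ℝ) :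
    HasDerivAt (fun x => x ^ (2 * α + 1) * poissonSin α (y * x))
      (y * (x ^ (2 * α + 1) * poissonCos α (y * x))) x := by
  obtain ⟨d, hd, he⟩ := hasDerivAt_poissonSin hα (y * x)
  have h1 := (hasDerivAt_rpow_const (p := 2 * α + 1) (Or.inl hx.ne')).mul
    (hd.comp x ((hasDerivAt_id x).const_mul y))
  convert! h1 using 1
  rw [add_sub_cancel_right, rpow_add_one hx.ne']
  simp only [Function.comp]
  linear_combination -(x ^ (2 * α)) * he

lemma mul_gaussian_poissonCos {α t : ℝ} (hα : 0 ≤ α) (ht : 0 < t) (y : ℝ) :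
    y * ∫ x in Set.Ioi 0, x ^ (2 * α + 1) * exp (-t * x ^ 2) * poissonCos α (y * x) =
      2 * t * ∫ x in Set.Ioi 0, x ^ (2 * α + 2) * exp (-t * x ^ 2) * poissonSin α (y * x) := by
  have hF := continuous_poissonCos hα
  have hG := continuous_poissonSin hα
  have i1 := (integrableOn_gaussian_mul (s := 2 * α + 1) (by linarith) ht
    (g := fun x => poissonCos α (y * x)) (by fun_prop) fun x => abs_poissonCos_le hα _).const_mul y
  have i2 := (integrableOn_gaussian_mul (s := 2 * α + 2) (by linarith) ht
    (g := fun x => poissonSin α (y * x)) (by fun_prop) fun x => abs_poissonSin_le hα _).const_mul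
      (2 * t)
  have h0 : (0 : ℝ) ^ (2 * α + 1) = 0 := zero_rpow (by positivity)
  have key := integral_Ioi_of_hasDerivAt_of_tendsto (a := 0) (m := 0)
    (f := fun x => x ^ (2 * α + 1) * poissonSin α (y * x) * exp (-t * x ^ 2))
    (f' := fun x => y * (x ^ (2 * α + 1) * exp (-t * x ^ 2) * poissonCos α (y * x)) -
      2 * t * (x ^ (2 * α + 2) * exp (-t * x ^ 2) * poissonSin α (y * x)))
    ?_ ?_ (i1.sub i2) ?_
  · rw [integral_sub i1 i2, integral_const_mul, integral_const_mul, h0] at key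
    linarith
  · have hc : Continuous fun x : ℝ => x ^ (2 * α + 1) :=
      continuous_id.rpow_const fun _ => Or.inr (by positivity)
    exact Continuous.continuousWithinAt (by fun_prop)
  · intro x hx
    have hx : 0 < x := hx
    have h1 := (hasDerivAt_rpow_mul_poissonSin hα hx y).mul
      (((hasDerivAt_pow 2 x).const_mul (-t)).exp)
    convert! h1 using 1
    rw [show 2 * α + 2 = 2 * α + 1 + 1 by ring, rpow_add_one hx.ne' (2 * α + 1)]
    push_cast
    ring
  · have hlim : Tendsto (fun x : ℝ => x ^ (2 * α + 1) * exp (-t * x ^ 2)) atTop (nhds 0) := by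
      refine (rpow_mul_exp_neg_mul_sq_isLittleO_exp_neg ht _).isBigO.trans_tendsto ?_
      refine tendsto_exp_atBot.comp ?_
      exact tendsto_id.const_mul_atTop_of_neg (by norm_num)
    refine (hlim.zero_mul_isBoundedUnder_le (g := fun x => poissonSin α (y * x)) ?_).congr
      fun x => by ring
    exact isBoundedUnder_of ⟨π / 2, fun x => abs_poissonSin_le hα _⟩

lemma gaussian_poissonCos {α t : ℝ} (hα : 0 ≤ α) (ht : 0 < t) (y : ℝ) :
    ∫ x in Set.Ioi 0, x ^ (2 * α + 1) * exp (-t * x ^ 2) * poissonCos α (y * x) =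
      √π * Gamma (α + 1 / 2) / 4 * t ^ (-(α + 1)) * exp (-y ^ 2 / (4 * t)) := by
  set Φ : ℝ → ℝ := fun y => ∫ x in Set.Ioi 0,
    x ^ (2 * α + 1) * exp (-t * x ^ 2) * poissonCos α (y * x) with hΦ
  have hd : ∀ y, HasDerivAt (fun y => Φ y * exp (y ^ 2 / (4 * t))) 0 y := fun y => by
    have h1 := (hasDerivAt_gaussian_poissonCos hα ht y).mul
      (((hasDerivAt_pow 2 y).div_const (4 * t)).exp)
    convert! h1 using 1
    have h2 := mul_gaussian_poissonCos hα ht y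
    generalize (∫ x in Set.Ioi 0, x ^ (2 * α + 1) * exp (-t * x ^ 2) * poissonCos α (y * x)) = A
      at h2 ⊢
    generalize (∫ x in Set.Ioi 0, x ^ (2 * α + 2) * exp (-t * x ^ 2) * poissonSin α (y * x)) = B
      at h2 ⊢
    push_cast
    field_simp
    linear_combination -2 * exp (y ^ 2 / (4 * t)) * h2
  have hconst := is_const_of_deriv_eq_zero (fun y => (hd y).differentiableAt)
    (fun y => (hd y).deriv) y 0
  have hzero : Φ 0 = √π * Gamma (α + 1 / 2) / 4 * t ^ (-(α + 1)) := by
    have h1 := integral_rpow_mul_exp_neg_mul_rpow (p := 2) (q := 2 * α + 1) two_pos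
      (by linarith) ht
    simp only [rpow_two] at h1
    simp only [hΦ, zero_mul]
    rw [integral_mul_const, h1]
    have h2 := poissonCos_zero_mul_Gamma hα
    rw [show (2 * α + 1 + 1) / 2 = α + 1 by ring, show -(2 * α + 1 + 1) / 2 = -(α + 1) by ring]
    linear_combination t ^ (-(α + 1)) / 2 * h2
  change Φ y = _
  rw [← hzero, neg_div, exp_neg]
  rw [zero_pow two_ne_zero, zero_div, exp_zero, mul_one] at hconst
  rw [← hconst]
  field_simp

lemma gaussian_poissonSin {α t : ℝ} (hα : 0 ≤ α) (ht : 0 < t) (y : ℝ) :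
    ∫ x in Set.Ioi 0, x ^ (2 * α + 2) * exp (-t * x ^ 2) * poissonSin α (y * x) =
      y / (2 * t) *
        (√π * Gamma (α + 1 / 2) / 4 * t ^ (-(α + 1)) * exp (-y ^ 2 / (4 * t))) := by
  rw [← gaussian_poissonCos hα ht, div_mul_eq_mul_div, mul_gaussian_poissonCos hα ht,
    mul_div_cancel_left₀ _ (by positivity)]

/-- Sommerfeld's integral for `besselK`. -/
lemma integral_rpow_mul_exp_eq_besselK {α h z : ℝ} (hh : 0 < h) (hz : 0 < z)
    (hint : IntegrableOn (fun t => t ^ (-(α + 1)) * exp (-t * z ^ 2 - h ^ 2 / (4 * t)))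
      (Set.Ioi 0)) :
    ∫ t in Set.Ioi 0, t ^ (-(α + 1)) * exp (-t * z ^ 2 - h ^ 2 / (4 * t)) =
      2 * (2 * z / h) ^ α * besselK α (h * z) := by
  have himg : (fun u => h / (2 * z) * exp u) '' Set.univ = Set.Ioi 0 := by
    ext t
    simp only [Set.image_univ, Set.mem_range, Set.mem_Ioi]
    constructor
    · rintro ⟨u, rfl⟩
      positivity
    · intro ht
      refine ⟨log (t / (h / (2 * z))), ?_⟩
      rw [exp_log (by positivity)]
      field_simp
  have hderiv : ∀ u ∈ Set.univ, HasDerivWithinAt (fun u => h / (2 * z) * exp u)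
      (h / (2 * z) * exp u) Set.univ u := fun u _ =>
    ((hasDerivAt_exp u).const_mul _).hasDerivWithinAt
  have hinj : Set.InjOn (fun u => h / (2 * z) * exp u) Set.univ := fun a _ b _ hab =>
    exp_injective (mul_left_cancel₀ (by positivity) hab)
  have hfun : ∀ u, |h / (2 * z) * exp u| • ((h / (2 * z) * exp u) ^ (-(α + 1)) *
      exp (-(h / (2 * z) * exp u) * z ^ 2 - h ^ 2 / (4 * (h / (2 * z) * exp u)))) =
      (2 * z / h) ^ α * (exp (-(α * u)) * exp (-(h * z) * cosh u)) := fun u => by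
    have hp : 0 < h / (2 * z) * exp u := by positivity
    have e1 : (h / (2 * z) * exp u) ^ (-(α + 1)) =
        (2 * z / h) ^ α * exp (-(α * u)) * (h / (2 * z) * exp u)⁻¹ := by
      rw [neg_add, rpow_add hp, rpow_neg_one, mul_rpow (by positivity) (by positivity),
        ← exp_mul, ← inv_div (2 * z) h, inv_rpow (by positivity), rpow_neg (by positivity), inv_inv]
      ring_nf
    have e2 : -(h / (2 * z) * exp u) * z ^ 2 - h ^ 2 / (4 * (h / (2 * z) * exp u)) =
        -(h * z) * cosh u := by
      rw [cosh_eq, exp_neg]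
      field_simp
      ring
    rw [e1, e2, abs_of_pos hp, smul_eq_mul]
    field_simp
  have hchange := MeasureTheory.integral_image_eq_integral_abs_deriv_smul MeasurableSet.univ
    hderiv hinj (fun t => t ^ (-(α + 1)) * exp (-t * z ^ 2 - h ^ 2 / (4 * t)))
  have hint' := (MeasureTheory.integrableOn_image_iff_integrableOn_abs_deriv_smul
    MeasurableSet.univ hderiv hinj
    (fun t => t ^ (-(α + 1)) * exp (-t * z ^ 2 - h ^ 2 / (4 * t)))).1 (by rwa [himg])
  simp only [hfun, integrableOn_univ] at hint'
  rw [himg] at hchange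
  simp only [hfun, Measure.restrict_univ] at hchange
  rw [hchange, integral_const_mul]
  have hc : (2 * z / h) ^ α ≠ 0 := by positivity
  have hi : Integrable fun u => exp (-(α * u)) * exp (-(h * z) * cosh u) := by
    refine (hint'.const_mul ((2 * z / h) ^ α)⁻¹).congr (Eventually.of_forall fun u => ?_)
    simp only
    field_simp
  have hsum := integral_add hi hi.comp_neg
  rw [integral_neg_eq_self (fun u => exp (-(α * u)) * exp (-(h * z) * cosh u))] at hsum
  have habs := integral_comp_abs (f := fun u => 2 * (exp (-(h * z) * cosh u) * cosh (α * u)))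
  have hK : ∫ u, (exp (-(α * u)) * exp (-(h * z) * cosh u) +
      exp (-(α * -u)) * exp (-(h * z) * cosh (-u))) = 4 * besselK α (h * z) := by
    rw [besselK, show (4 : ℝ) = 2 * 2 by norm_num, mul_assoc, ← integral_const_mul, ← habs]
    refine integral_congr_ae (Eventually.of_forall fun u => ?_)
    have e : cosh (α * |u|) = cosh (α * u) := by
      rw [← cosh_abs (α * |u|), ← cosh_abs (α * u), abs_mul, abs_mul, abs_abs]
    simp only
    rw [e, cosh_abs, cosh_neg, cosh_eq (α * u), mul_neg, neg_neg]
    ring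
  rw [hK] at hsum
  linear_combination -(2 * z / h) ^ α / 2 * hsum

lemma exists_abs_poissonSin_le_rpow {α : ℝ} (hα0 : 0 ≤ α) (hα1 : α < 1) :
    ∃ C s : ℝ, 2 * α + s < 1 ∧ ∀ x, 0 < x → |poissonSin α x| ≤ C * x ^ s := by
  rcases lt_or_ge α (1 / 2) with hα | hα
  · exact ⟨π / 2, 0, by linarith, fun x _ => by
      simpa using abs_poissonSin_le hα0 x⟩
  · obtain ⟨C, hC⟩ := exists_abs_mul_poissonSin_le hα
    refine ⟨C, -1, by linarith, fun x hx => ?_⟩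
    have := hC x
    rw [abs_mul, abs_of_pos hx] at this
    rw [rpow_neg_one, ← div_eq_mul_inv, le_div_iff₀ hx]
    linarith

lemma exists_abs_poissonSin_mul_le_rpow {α h : ℝ} (hα0 : 0 ≤ α) (hα1 : α < 1) (hh : 0 < h) :
    ∃ C s : ℝ, 2 * α + s < 1 ∧ ∀ x, 0 < x → |poissonSin α (h * x)| ≤ C * x ^ s := by
  obtain ⟨C, s, hs, hC⟩ := exists_abs_poissonSin_le_rpow hα0 hα1
  refine ⟨C * h ^ s, s, hs, fun x hx => (hC _ (by positivity)).trans_eq ?_⟩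
  rw [mul_rpow hh.le hx.le, mul_assoc]

lemma integrableOn_poissonSin {α h z : ℝ} (hα0 : 0 ≤ α) (hα1 : α < 1) (hh : 0 < h)
    (hz : 0 < z) :
    IntegrableOn (fun x => x ^ (2 * α + 2) * poissonSin α (h * x) / (x ^ 2 + z ^ 2) ^ 2)
      (Set.Ioi 0) := by
  have hG := continuous_poissonSin hα0
  have hp : Continuous fun x : ℝ => x ^ (2 * α + 2) :=
    continuous_id.rpow_const fun _ => Or.inr (by positivity)
  have hcont : Continuous fun x => x ^ (2 * α + 2) * poissonSin α (h * x) /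
      (x ^ 2 + z ^ 2) ^ 2 :=
    Continuous.div (by fun_prop) (by fun_prop) fun x => by positivity
  rw [← Set.Ioc_union_Ioi_eq_Ioi zero_le_one]
  refine IntegrableOn.union (hcont.integrableOn_Ioc) ?_
  obtain ⟨C, s, hs, hC⟩ := exists_abs_poissonSin_mul_le_rpow hα0 hα1 hh
  refine Integrable.mono' ((integrableOn_Ioi_rpow_of_lt (a := 2 * α - 2 + s) (by linarith)
    one_pos).const_mul C) hcont.aestronglyMeasurable ?_
  refine (ae_restrict_mem measurableSet_Ioi).mono fun x hx => ?_
  have hx : 0 < x := one_pos.trans hx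
  rw [norm_div, norm_mul, norm_of_nonneg (rpow_nonneg hx.le _),
    norm_of_nonneg (by positivity : 0 ≤ (x ^ 2 + z ^ 2) ^ 2),
    div_le_iff₀ (by positivity)]
  have hsq : x ^ (4 : ℝ) ≤ (x ^ 2 + z ^ 2) ^ 2 := by
    rw [show (4 : ℝ) = (4 : ℕ) by norm_num, rpow_natCast]
    nlinarith [sq_nonneg x, sq_nonneg z, mul_nonneg (sq_nonneg x) (sq_nonneg z),
      sq_nonneg (z ^ 2)]
  have hCx : 0 ≤ C * x ^ s := (abs_nonneg _).trans (hC x hx)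
  calc x ^ (2 * α + 2) * ‖poissonSin α (h * x)‖
      ≤ x ^ (2 * α + 2) * (C * x ^ s) := by gcongr; exact hC x hx
    _ = C * x ^ (2 * α - 2 + s) * x ^ (4 : ℝ) := by
        rw [mul_assoc, ← rpow_add hx, mul_left_comm, ← rpow_add hx]
        ring_nf
    _ ≤ _ := by
        refine mul_le_mul_of_nonneg_left hsq ?_
        have : C * x ^ (2 * α - 2 + s) = C * x ^ s * x ^ (2 * α - 2) := by
          rw [mul_assoc, ← rpow_add hx]
          ring_nf
        rw [this]
        positivity

lemma tendsto_rpow_mul_poissonSin_div {α h z : ℝ} (hα0 : 0 ≤ α) (hα1 : α < 1) (hh : 0 < h)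
    (hz : 0 < z) :
    Tendsto (fun R => R ^ (2 * α + 1) * poissonSin α (h * R) / (R ^ 2 + z ^ 2)) atTop
      (nhds 0) := by
  obtain ⟨C, s, hs, hC⟩ := exists_abs_poissonSin_mul_le_rpow hα0 hα1 hh
  have hlim : Tendsto (fun R : ℝ => C * R ^ (-(1 - 2 * α - s))) atTop (nhds 0) := by
    simpa using (tendsto_rpow_neg_atTop (by linarith : 0 < 1 - 2 * α - s)).const_mul C
  refine squeeze_zero_norm' ?_ hlim
  filter_upwards [eventually_gt_atTop 0] with R hR
  rw [norm_div, norm_mul, norm_of_nonneg (rpow_nonneg hR.le _),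
    norm_of_nonneg (by positivity : 0 ≤ R ^ 2 + z ^ 2)]
  calc R ^ (2 * α + 1) * ‖poissonSin α (h * R)‖ / (R ^ 2 + z ^ 2)
      ≤ R ^ (2 * α + 1) * ‖poissonSin α (h * R)‖ / R ^ (2 : ℝ) := by
        rw [rpow_two]
        gcongr
        nlinarith [sq_nonneg z]
    _ ≤ R ^ (2 * α + 1) * (C * R ^ s) / R ^ (2 : ℝ) := by gcongr; exact hC R hR
    _ = C * R ^ (-(1 - 2 * α - s)) := by
        rw [mul_left_comm, ← rpow_add hR, mul_div_assoc, ← rpow_sub hR]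
        ring_nf

lemma integral_mul_exp_neg_mul {a : ℝ} (ha : 0 < a) :
    ∫ t in Set.Ioi 0, t * exp (-(a * t)) = 1 / a ^ 2 := by
  have := integral_rpow_mul_exp_neg_mul_Ioi two_pos ha
  norm_num at this
  simpa using! this

lemma integrableOn_mul_exp_neg_mul {a : ℝ} (ha : 0 < a) :
    IntegrableOn (fun t => t * exp (-(a * t))) (Set.Ioi 0) := by
  by_contra hn
  have h1 := integral_mul_exp_neg_mul ha
  rw [integral_undef hn] at h1
  have : 0 < 1 / a ^ 2 := by positivity
  linarith

lemma integral_poissonSin_eq_besselK {α h z : ℝ} (hα0 : 0 ≤ α) (hα1 : α < 1) (hh : 0 < h)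
    (hz : 0 < z) :
    ∫ x in Set.Ioi 0, x ^ (2 * α + 2) * poissonSin α (h * x) / (x ^ 2 + z ^ 2) ^ 2 =
      h / 4 * (√π * Gamma (α + 1 / 2)) * (2 * z / h) ^ α * besselK α (h * z) := by
  have hG := continuous_poissonSin hα0
  set f : ℝ → ℝ → ℝ := fun x t =>
    x ^ (2 * α + 2) * poissonSin α (h * x) * (t * exp (-((x ^ 2 + z ^ 2) * t))) with hf
  set μ : Measure ℝ := volume.restrict (Set.Ioi 0) with hμ
  have hmeas : AEStronglyMeasurable (Function.uncurry f) (μ.prod μ) := by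
    have := hG.measurable
    exact Measurable.aestronglyMeasurable (by unfold Function.uncurry; fun_prop)
  have hapos : ∀ x : ℝ, 0 < x ^ 2 + z ^ 2 := fun x => by positivity
  have hint : Integrable (Function.uncurry f) (μ.prod μ) := by
    refine (integrable_prod_iff hmeas).2 ⟨Eventually.of_forall fun x =>
      (integrableOn_mul_exp_neg_mul (hapos x)).const_mul
        (x ^ (2 * α + 2) * poissonSin α (h * x)), ?_⟩
    refine (integrableOn_poissonSin hα0 hα1 hh hz).norm.congr
      (Eventually.of_forall fun x => ?_)
    simp only [Function.uncurry_apply_pair, hf, norm_mul, norm_div]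
    rw [integral_const_mul]
    have : ∫ t, ‖t‖ * ‖exp (-((x ^ 2 + z ^ 2) * t))‖ ∂μ = 1 / (x ^ 2 + z ^ 2) ^ 2 := by
      rw [← integral_mul_exp_neg_mul (hapos x)]
      refine setIntegral_congr_fun measurableSet_Ioi fun t ht => ?_
      simp only [norm_of_nonneg (le_of_lt ht), norm_of_nonneg (exp_nonneg _)]
    rw [this, norm_of_nonneg (by positivity : 0 ≤ (x ^ 2 + z ^ 2) ^ 2)]
    ring
  have hx : ∀ x, ∫ t, f x t ∂μ =
      x ^ (2 * α + 2) * poissonSin α (h * x) / (x ^ 2 + z ^ 2) ^ 2 := fun x => by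
    simp only [hf]
    rw [integral_const_mul, integral_mul_exp_neg_mul (hapos x)]
    ring
  have ht : ∀ t, 0 < t → ∫ x, f x t ∂μ = h / 2 * (√π * Gamma (α + 1 / 2) / 4) *
      (t ^ (-(α + 1)) * exp (-t * z ^ 2 - h ^ 2 / (4 * t))) := fun t ht => by
    have e : ∀ x, f x t = t * exp (-t * z ^ 2) *
        (x ^ (2 * α + 2) * exp (-t * x ^ 2) * poissonSin α (h * x)) := fun x => by
      have : exp (-((x ^ 2 + z ^ 2) * t)) = exp (-t * z ^ 2) * exp (-t * x ^ 2) := by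
        rw [← exp_add]; ring_nf
      simp only [hf, this]
      ring
    simp only [e]
    rw [integral_const_mul, gaussian_poissonSin hα0 ht, sub_eq_add_neg, exp_add, ← neg_div]
    field_simp
  have hGamma : 0 < Gamma (α + 1 / 2) := Gamma_pos_of_pos (by positivity)
  have hc : h / 2 * (√π * Gamma (α + 1 / 2) / 4) ≠ 0 := by positivity
  have hright : IntegrableOn (fun t => t ^ (-(α + 1)) * exp (-t * z ^ 2 - h ^ 2 / (4 * t)))
      (Set.Ioi 0) := by
    refine (hint.integral_prod_right.const_mul
      (h / 2 * (√π * Gamma (α + 1 / 2) / 4))⁻¹).congr ?_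
    refine (ae_restrict_mem measurableSet_Ioi).mono fun t ht0 => ?_
    simp only [Function.uncurry_apply_pair]
    rw [ht t ht0, inv_mul_cancel_left₀ hc]
  have hswap := integral_integral_swap hint
  simp only [hx] at hswap
  rw [hswap, setIntegral_congr_fun measurableSet_Ioi fun t ht0 => ht t ht0, integral_const_mul,
    integral_rpow_mul_exp_eq_besselK hh hz hright]
  ring

lemma integral_poissonCos_eq {α h z R : ℝ} (hα : 0 ≤ α) (hh : 0 < h) (hz : 0 < z)
    (hR : 0 ≤ R) :
    ∫ x in (0:ℝ)..R, x ^ (2 * α + 1) * poissonCos α (h * x) / (x ^ 2 + z ^ 2) =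
      h⁻¹ * (R ^ (2 * α + 1) * poissonSin α (h * R) / (R ^ 2 + z ^ 2)) +
      2 / h * ∫ x in (0:ℝ)..R,
        x ^ (2 * α + 2) * poissonSin α (h * x) / (x ^ 2 + z ^ 2) ^ 2 := by
  have hF := continuous_poissonCos hα
  have hG := continuous_poissonSin hα
  have hp1 : Continuous fun x : ℝ => x ^ (2 * α + 1) :=
    continuous_id.rpow_const fun _ => Or.inr (by positivity)
  have hp2 : Continuous fun x : ℝ => x ^ (2 * α + 2) :=
    continuous_id.rpow_const fun _ => Or.inr (by positivity)
  have hpos : ∀ x : ℝ, 0 < x ^ 2 + z ^ 2 := fun x => by positivity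
  have c0 : Continuous fun x => x ^ (2 * α + 1) * poissonSin α (h * x) / (x ^ 2 + z ^ 2) :=
    Continuous.div (by fun_prop) (by fun_prop) fun x => (hpos x).ne'
  have i1 : IntervalIntegrable (fun x => h * (x ^ (2 * α + 1) * poissonCos α (h * x) /
      (x ^ 2 + z ^ 2))) volume 0 R := Continuous.intervalIntegrable (continuous_const.mul
    (Continuous.div (by fun_prop) (by fun_prop) fun x => (hpos x).ne')) _ _
  have i2 : IntervalIntegrable (fun x => 2 * (x ^ (2 * α + 2) * poissonSin α (h * x) /
      (x ^ 2 + z ^ 2) ^ 2)) volume 0 R := Continuous.intervalIntegrable (continuous_const.mul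
    (Continuous.div (by fun_prop) (by fun_prop) fun x => (pow_pos (hpos x) 2).ne')) _ _
  have key := intervalIntegral.integral_eq_sub_of_hasDerivAt_of_le hR c0.continuousOn
    (fun x hx => ?_) (i1.sub i2)
  · rw [intervalIntegral.integral_sub i1 i2, intervalIntegral.integral_const_mul,
      intervalIntegral.integral_const_mul, zero_rpow (by positivity), zero_mul,
      zero_div, sub_zero] at key
    generalize (∫ x in (0:ℝ)..R, x ^ (2 * α + 1) * poissonCos α (h * x) / (x ^ 2 + z ^ 2)) = A
      at key ⊢
    generalize (∫ x in (0:ℝ)..R,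
      x ^ (2 * α + 2) * poissonSin α (h * x) / (x ^ 2 + z ^ 2) ^ 2) = B at key ⊢
    generalize R ^ (2 * α + 1) * poissonSin α (h * R) / (R ^ 2 + z ^ 2) = D at key ⊢
    field_simp
    linear_combination key
  · have h1 := (hasDerivAt_rpow_mul_poissonSin hα hx.1 h).div
      ((hasDerivAt_pow 2 x).add_const (z ^ 2)) (hpos x).ne'
    convert! h1 using 1
    rw [show 2 * α + 2 = 2 * α + 1 + 1 by ring, rpow_add_one hx.1.ne' (2 * α + 1)]
    have := (hpos x).ne'
    push_cast
    field_simp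

lemma rpow_mul_besselJ {α h x : ℝ} (hh : 0 < h) (hx : 0 < x) :
    x ^ (1 + α) * besselJ α (h * x) =
      2 * (h / 2) ^ α / (√π * Gamma (α + 1 / 2)) *
        (x ^ (2 * α + 1) * poissonCos α (h * x)) := by
  have e : (h * x / 2) ^ α = (h / 2) ^ α * x ^ α := by
    rw [mul_div_right_comm, mul_rpow (by positivity) hx.le]
  rw [besselJ, poissonCos, e, show 2 * α + 1 = 1 + α + α by ring, rpow_add hx (1 + α) α]
  ring

/-- Hankel–Nicholson formula with `ν = α`, `μ = 0`: for `0 ≤ α < 1`, `h > 0`, `z > 0`,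
`∫₀^∞ x^{1+α} J_α(hx)/(x² + z²) dx = z^α K_α(hz)` as an improper
(conditionally convergent) integral. -/
theorem hankel_nicholson_nu_alpha_mu_zero (α h z : ℝ)
    (hα0 : 0 ≤ α) (hα1 : α < 1) (hh : 0 < h) (hz : 0 < z) :
    Tendsto (fun R : ℝ =>
        ∫ x in (0:ℝ)..R, x ^ (1 + α) * besselJ α (h * x) / (x ^ 2 + z ^ 2))
      atTop (nhds (z ^ α * besselK α (h * z))) := by
  have hswap : ∀ᶠ R in atTop, 2 * (h / 2) ^ α / (√π * Gamma (α + 1 / 2)) *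
      (h⁻¹ * (R ^ (2 * α + 1) * poissonSin α (h * R) / (R ^ 2 + z ^ 2)) +
        2 / h * ∫ x in (0:ℝ)..R,
          x ^ (2 * α + 2) * poissonSin α (h * x) / (x ^ 2 + z ^ 2) ^ 2) =
      ∫ x in (0:ℝ)..R, x ^ (1 + α) * besselJ α (h * x) / (x ^ 2 + z ^ 2) := by
    filter_upwards [eventually_ge_atTop 0] with R hR
    rw [← integral_poissonCos_eq hα0 hh hz hR, ← intervalIntegral.integral_const_mul,
      intervalIntegral.integral_of_le hR, intervalIntegral.integral_of_le hR]
    refine setIntegral_congr_fun measurableSet_Ioc fun x hx => ?_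
    rw [rpow_mul_besselJ hh hx.1]
    ring
  refine Tendsto.congr' hswap ?_
  have hlim := intervalIntegral_tendsto_integral_Ioi 0
    (integrableOn_poissonSin hα0 hα1 hh hz) tendsto_id
  rw [integral_poissonSin_eq_besselK hα0 hα1 hh hz] at hlim
  convert! (((tendsto_rpow_mul_poissonSin_div hα0 hα1 hh hz).const_mul h⁻¹).add
    (hlim.const_mul (2 / h))).const_mul (2 * (h / 2) ^ α / (√π * Gamma (α + 1 / 2))) using 2
  have hGamma : 0 < Gamma (α + 1 / 2) := Gamma_pos_of_pos (by positivity)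
  have hzα : z ^ α = (h / 2) ^ α * (2 * z / h) ^ α := by
    rw [← mul_rpow (by positivity) (by positivity)]
    congr 1
    field_simp
  rw [hzα]
  field_simp
  ring
end
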